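/- Let (X,d) be a proper geodesic metric space of finite covering dimension that admits a ccc geodesic bicombing σ and a cocompact action of some group G by isometries. If there exist two σ-rays in X that are not asymptotic, then X is almost σ-geodesically complete: there exist a point o ∈ X and a constant C ≥ 0 such that for every x ∈ X there is a σ-ray ξ with ξ(0) = o whose image meets the closed ball of radius C around x. -/

import Mathlib

open Metric Set
open scoped Pointwise

variable {X : Type*} [MetricSpace X]

/-- A geodesic bicombing on a metric space: a continuous choice of constant-speed
geodesics, parametrized on `[0,1]`. -/
def IsGeodesicBicombing (σ : X → X → ℝ → X) : Prop :=
  ContinuousOn (fun p : X × X × ℝ => σ p.1 p.2.1 p.2.2)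
    {p : X × X × ℝ | p.2.2 ∈ Set.Icc (0 : ℝ) 1} ∧
  (∀ x y : X, σ x y 0 = x) ∧
  (∀ x y : X, σ x y 1 = y) ∧
  (∀ x y : X, ∀ s ∈ Set.Icc (0 : ℝ) 1, ∀ t ∈ Set.Icc (0 : ℝ) 1,
    dist (σ x y s) (σ x y t) = |s - t| * dist x y)

/-- A bicombing is conical. -/
def IsConical (σ : X → X → ℝ → X) : Prop :=
  ∀ x y x' y' : X, ∀ t ∈ Set.Icc (0 : ℝ) 1,
    dist (σ x y t) (σ x' y' t) ≤ (1 - t) * dist x x' + t * dist y y'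

/-- A bicombing is consistent. -/
def IsConsistent (σ : X → X → ℝ → X) : Prop :=
  ∀ x y : X, ∀ s t l : ℝ, 0 ≤ s → s ≤ t → t ≤ 1 → l ∈ Set.Icc (0 : ℝ) 1 →
    σ (σ x y s) (σ x y t) l = σ x y ((1 - l) * s + l * t)

/-- A ccc bicombing: a geodesic bicombing that is consistent and conical. -/
def IsCCC (σ : X → X → ℝ → X) : Prop :=
  IsGeodesicBicombing σ ∧ IsConsistent σ ∧ IsConical σ

/-- A `σ`-ray: a unit-speed geodesic ray compatible with the bicombing `σ`
(encoded as a map on `ℝ` which is constant on `(-∞,0]`). -/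
def IsRay (σ : X → X → ℝ → X) (ξ : ℝ → X) : Prop :=
  (∀ t : ℝ, t ≤ 0 → ξ t = ξ 0) ∧
  (∀ s t : ℝ, 0 ≤ s → 0 ≤ t → dist (ξ s) (ξ t) = |s - t|) ∧
  (∀ t : ℝ, 0 ≤ t → ∀ s ∈ Set.Icc (0 : ℝ) 1, σ (ξ 0) (ξ t) s = ξ (s * t))

/-- Two rays are asymptotic: their distance at time `t` is uniformly bounded for `t ≥ 0`. -/
def Asymptotic (ξ ζ : ℝ → X) : Prop :=
  ∃ M : ℝ, ∀ t : ℝ, 0 ≤ t → dist (ξ t) (ζ t) ≤ M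

/-- A geodesic metric space: every pair of points is joined by a (constant-speed) geodesic. -/
def IsGeodesicSpace (X : Type*) [MetricSpace X] : Prop :=
  ∀ x y : X, ∃ γ : ℝ → X, γ 0 = x ∧ γ 1 = y ∧
    ∀ s ∈ Set.Icc (0 : ℝ) 1, ∀ t ∈ Set.Icc (0 : ℝ) 1,
      dist (γ s) (γ t) = |s - t| * dist x y

/-- Finite covering dimension: there is `n` such that every open cover has an open
refinement in which each point belongs to at most `n + 1` members. -/
def FiniteCoveringDimension (X : Type*) [TopologicalSpace X] : Prop :=
  ∃ n : ℕ, ∀ 𝒰 : Set (Set X), (∀ U ∈ 𝒰, IsOpen U) → ⋃₀ 𝒰 = Set.univ →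
    ∃ 𝒱 : Set (Set X), (∀ V ∈ 𝒱, IsOpen V) ∧ ⋃₀ 𝒱 = Set.univ ∧
      (∀ V ∈ 𝒱, ∃ U ∈ 𝒰, V ⊆ U) ∧
      ∀ x : X, {V | V ∈ 𝒱 ∧ x ∈ V}.Finite ∧ Nat.card {V | V ∈ 𝒱 ∧ x ∈ V} ≤ n + 1

namespace AGC

noncomputable section

open Finsupp

/-- chains on lists, mod 2 -/
abbrev LC (α : Type*) := List α →₀ ZMod 2
/-- chains on finsets, mod 2 -/
abbrev FC (α : Type*) := Finset α →₀ ZMod 2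

section algebra
variable {α : Type*} {β : Type*}

lemma mem_of_supported {γ δ : Type*} (T : (γ →₀ ZMod 2) →ₗ[ZMod 2] (δ →₀ ZMod 2)) (Z : Set γ)
    (N : Submodule (ZMod 2) (δ →₀ ZMod 2)) (h : ∀ s ∈ Z, T (single s 1) ∈ N)
    {x : γ →₀ ZMod 2} (hx : x ∈ supported (ZMod 2) (ZMod 2) Z) : T x ∈ N := by
  rw [supported_eq_span_single] at hx
  induction hx using Submodule.span_induction with
  | mem x hx => obtain ⟨s, hs, rfl⟩ := hx; exact h s hs
  | zero => simp
  | add x y _ _ hx hy => rw [map_add]; exact N.add_mem hx hy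
  | smul a x _ hx => rw [map_smul]; exact N.smul_mem a hx

lemma eq_of_single {γ M : Type*} [AddCommMonoid M] [Module (ZMod 2) M]
    (T T' : (γ →₀ ZMod 2) →ₗ[ZMod 2] M)
    (h : ∀ s, T (single s 1) = T' (single s 1)) (x : γ →₀ ZMod 2) : T x = T' x := by
  have : T = T' := by
    ext s
    simpa using h s
  rw [this]

lemma char2 {M : Type*} [AddCommGroup M] [Module (ZMod 2) M] (x : M) : x + x = 0 := by
  have : (2 : ZMod 2) • x = 0 := by
    rw [show (2 : ZMod 2) = 0 from rfl, zero_smul]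
  rwa [two_smul] at this

def consL (a : α) : LC α →ₗ[ZMod 2] LC α := lmapDomain (ZMod 2) (ZMod 2) (List.cons a)

@[simp] lemma consL_single (a : α) (l : List α) (c : ZMod 2) :
    consL a (single l c) = single (a :: l) c := by simp [consL, lmapDomain_apply, mapDomain_single]

def mapL (f : α → β) : LC α →ₗ[ZMod 2] LC β := lmapDomain (ZMod 2) (ZMod 2) (List.map f)

@[simp] lemma mapL_single (f : α → β) (l : List α) (c : ZMod 2) :
    mapL f (single l c) = single (l.map f) c := by simp [mapL, lmapDomain_apply, mapDomain_single]

lemma mapL_consL (f : α → β) (a : α) (x : LC α) : mapL f (consL a x) = consL (f a) (mapL f x) :=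
  eq_of_single (mapL f ∘ₗ consL a) (consL (f a) ∘ₗ mapL f) (by intro s; simp) x

def bdryList : List α → LC α
  | [] => 0
  | a :: l => single l 1 - consL a (bdryList l)

def dB : LC α →ₗ[ZMod 2] LC α := linearCombination (ZMod 2) bdryList

@[simp] lemma dB_single (l : List α) : dB (single l 1) = bdryList l := by
  simp [dB]

lemma dB_consL (a : α) (x : LC α) : dB (consL a x) = x - consL a (dB x) :=
  eq_of_single (dB ∘ₗ consL a) (LinearMap.id - consL a ∘ₗ dB)
    (by intro s; simp [bdryList]) x

lemma dB_bdryList (l : List α) : dB (bdryList l) = 0 := by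
  induction l with
  | nil => simp [bdryList]
  | cons a l ih => simp [bdryList, dB_consL, ih]

lemma dB_dB (x : LC α) : dB (dB x) = 0 :=
  eq_of_single (dB ∘ₗ dB) 0 (by intro s; simp [dB_bdryList]) x

lemma dB_mapL (f : α → β) (x : LC α) : dB (mapL f x) = mapL f (dB x) := by
  refine eq_of_single (dB ∘ₗ mapL f) (mapL f ∘ₗ dB) ?_ x
  intro l
  induction l with
  | nil => simp [bdryList]
  | cons a l ih =>
    simp only [LinearMap.comp_apply, mapL_single, dB_single] at ih
    simp [bdryList, ih, mapL_consL]

def prismList (f g : α → β) : List α → LC β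
  | [] => 0
  | a :: l => single (f a :: g a :: l.map g) 1 - consL (f a) (prismList f g l)

def prism (f g : α → β) : LC α →ₗ[ZMod 2] LC β := linearCombination (ZMod 2) (prismList f g)

@[simp] lemma prism_single (f g : α → β) (l : List α) :
    prism f g (single l 1) = prismList f g l := by
  simp [prism]

lemma prism_consL (f g : α → β) (a : α) (x : LC α) :
    prism f g (consL a x) = consL (f a) (consL (g a) (mapL g x)) - consL (f a) (prism f g x) :=
  eq_of_single (prism f g ∘ₗ consL a)
    (consL (f a) ∘ₗ consL (g a) ∘ₗ mapL g - consL (f a) ∘ₗ prism f g)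
    (by intro s; simp [prismList]) x

lemma prism_formula (f g : α → β) (x : LC α) :
    dB (prism f g x) + prism f g (dB x) = mapL g x - mapL f x := by
  refine eq_of_single (dB ∘ₗ prism f g + prism f g ∘ₗ dB) (mapL g - mapL f) ?_ x
  intro l
  induction l with
  | nil => simp [bdryList, prismList]
  | cons a l ih =>
    simp only [LinearMap.add_apply, LinearMap.comp_apply, LinearMap.sub_apply, mapL_single,
      dB_single, prism_single] at ih ⊢
    have h2 : dB (single (f a :: g a :: l.map g) (1 : ZMod 2)) =
        single (g a :: l.map g) 1 - consL (f a) (single (l.map g) 1)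
          + consL (f a) (consL (g a) (mapL g (bdryList l))) := by
      have := dB_mapL g (single l 1)
      simp only [mapL_single, dB_single] at this
      rw [dB_single, bdryList, bdryList, this, map_sub]
      abel
    rw [prismList, bdryList, map_sub, map_sub, h2, dB_consL, prism_consL, prism_single]
    have h3 : prism f g (bdryList l) =
      (single (l.map g) 1 - single (l.map f) 1) - dB (prismList f g l) := by
      rw [← ih]; abel
    rw [h3]
    simp only [map_sub, consL_single, List.map_cons]
    abel

lemma prismList_supp (f g : α → β) (l : List α) :
    prismList f g l ∈ supported (ZMod 2) (ZMod 2) {l' : List β | l ≠ [] ∧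
      l'.length = l.length + 1 ∧ (∀ x' ∈ l', ∃ x ∈ l, x' = f x ∨ x' = g x) ∧
      ∀ x ∈ l, f x ∈ l' ∨ g x ∈ l'} := by
  induction l with
  | nil => simp [prismList]
  | cons a l ih =>
    rw [prismList]
    refine Submodule.sub_mem _ ?_ ?_
    · refine single_mem_supported _ _ ⟨by simp, by simp, ?_, ?_⟩
      · simp only [List.mem_cons, List.mem_map]
        rintro x' (rfl | rfl | ⟨x, hx, rfl⟩)
        · exact ⟨a, by simp, by simp⟩
        · exact ⟨a, by simp, by simp⟩
        · exact ⟨x, by simp [hx], by simp⟩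
      · intro x hx
        simp only [List.mem_cons, List.mem_map] at hx ⊢
        rcases hx with rfl | hx
        · simp
        · exact Or.inr (Or.inr (Or.inr ⟨x, hx, rfl⟩))
    · refine mem_of_supported (consL (f a)) _ _ ?_ ih
      rintro l' ⟨h0, h1, h2, h3⟩
      rw [consL_single]
      refine single_mem_supported _ _ ⟨by simp, by simp [h1], ?_, ?_⟩
      · simp only [List.mem_cons]
        rintro x' (rfl | hx)
        · exact ⟨a, by simp, by simp⟩
        · obtain ⟨x, hx, h⟩ := h2 x' hx
          exact ⟨x, by simp [hx], h⟩
      · intro x hx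
        simp only [List.mem_cons] at hx ⊢
        rcases hx with rfl | hx
        · simp
        · rcases h3 x hx with h | h <;> simp [h]

/-- iterated prism -/
def prisms (h : ℕ → α → β) (N : ℕ) : LC α →ₗ[ZMod 2] LC β :=
  ∑ i ∈ Finset.range N, prism (h i) (h (i + 1))

lemma prisms_formula (h : ℕ → α → β) (N : ℕ) (x : LC α) :
    dB (prisms h N x) + prisms h N (dB x) = mapL (h N) x - mapL (h 0) x := by
  rw [← Finset.sum_range_sub (fun i => mapL (h i) x) N]
  simp only [prisms, LinearMap.sum_apply, map_sum]
  rw [← Finset.sum_add_distrib]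
  exact Finset.sum_congr rfl fun i _ => prism_formula _ _ _

lemma prisms_supp (h : ℕ → α → β) (N : ℕ) (l : List α) :
    prisms h N (single l 1) ∈ supported (ZMod 2) (ZMod 2) {l' : List β | ∃ i < N, l ≠ [] ∧
      l'.length = l.length + 1 ∧ (∀ x' ∈ l', ∃ x ∈ l, x' = h i x ∨ x' = h (i + 1) x) ∧
      ∀ x ∈ l, h i x ∈ l' ∨ h (i + 1) x ∈ l'} := by
  simp only [prisms, LinearMap.sum_apply, prism_single]
  refine Submodule.sum_mem _ fun i hi => ?_
  refine supported_mono ?_ (prismList_supp (h i) (h (i + 1)) l)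
  intro l' hl'
  exact ⟨i, Finset.mem_range.1 hi, hl'⟩

variable [DecidableEq α]

def consF (a : α) : FC α →ₗ[ZMod 2] FC α :=
  linearCombination (ZMod 2) (fun s => if a ∈ s then 0 else single (insert a s) 1)

def dA : FC α →ₗ[ZMod 2] FC α :=
  linearCombination (ZMod 2) (fun s => ∑ a ∈ s, single (s.erase a) 1)

@[simp] lemma consF_single (a : α) (s : Finset α) :
    consF a (single s 1) = if a ∈ s then 0 else single (insert a s) 1 := by
  simp [consF]

@[simp] lemma dA_single (s : Finset α) :
    dA (single s 1) = ∑ a ∈ s, single (s.erase a) 1 := by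
  simp [dA]

lemma dA_consF (a : α) (x : FC α) : dA (consF a x) = x - consF a (dA x) := by
  refine eq_of_single (dA ∘ₗ consF a) (LinearMap.id - consF a ∘ₗ dA) ?_ x
  intro s
  simp only [LinearMap.comp_apply, LinearMap.sub_apply, LinearMap.id_apply, consF_single,
    dA_single, map_sum]
  by_cases ha : a ∈ s
  · rw [if_pos ha, map_zero, Finset.sum_eq_single a]
    · simp [Finset.insert_erase ha]
    · intro b hb hba
      rw [if_pos]
      exact Finset.mem_erase.2 ⟨fun h => hba h.symm, ha⟩
    · intro h; exact absurd ha h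
  · rw [if_neg ha, dA_single, Finset.sum_insert ha, Finset.erase_insert ha, sub_eq_add_neg,
      ← Finset.sum_neg_distrib]
    congr 1
    refine Finset.sum_congr rfl fun b hb => ?_
    have hab : a ≠ b := fun h => ha (h ▸ hb)
    rw [if_neg (fun h => ha (Finset.mem_of_mem_erase h)),
      Finset.erase_insert_of_ne hab]
    exact eq_neg_of_add_eq_zero_left (char2 _)

lemma dA_dA (x : FC α) : dA (dA x) = 0 := by
  have key : ∀ s : Finset α, dA (dA (single s (1 : ZMod 2))) = 0 := by
    intro s
    induction s using Finset.induction_on with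
    | empty => simp
    | insert a s ha ih =>
      have : single (insert a s) (1 : ZMod 2) = consF a (single s 1) := by
        rw [consF_single, if_neg ha]
      have h0 : consF a (0 : FC α) = 0 := LinearMap.map_zero _
      rw [this, dA_consF, map_sub, dA_consF, ih, h0]
      abel
  have := eq_of_single (dA ∘ₗ dA) (0 : FC α →ₗ[ZMod 2] FC α)
    (by intro s; rw [LinearMap.comp_apply, key, LinearMap.zero_apply]) x
  rwa [LinearMap.comp_apply, LinearMap.zero_apply] at this

def qList : List α → FC α
  | [] => single ∅ 1
  | a :: l => consF a (qList l)

def q : LC α →ₗ[ZMod 2] FC α := linearCombination (ZMod 2) qList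

@[simp] lemma q_single (l : List α) : q (single l 1) = qList l := by simp [q]

lemma q_consL (a : α) (x : LC α) : q (consL a x) = consF a (q x) :=
  eq_of_single (q ∘ₗ consL a) (consF a ∘ₗ q) (by intro s; simp [qList]) x

lemma dA_q (x : LC α) : dA (q x) = q (dB x) := by
  refine eq_of_single (dA ∘ₗ q) (q ∘ₗ dB) ?_ x
  intro l
  induction l with
  | nil => simp [qList, bdryList]
  | cons a l ih =>
    simp only [LinearMap.comp_apply, q_single, dB_single] at ih ⊢
    simp [qList, bdryList, dA_consF, ih, q_consL]

lemma qList_supp (l : List α) : qList l ∈ supported (ZMod 2) (ZMod 2)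
    {s : Finset α | s.card = l.length ∧ ∀ a ∈ s, a ∈ l} := by
  induction l with
  | nil => exact single_mem_supported _ _ (by simp)
  | cons a l ih =>
    rw [qList]
    refine mem_of_supported (consF a) _ _ ?_ ih
    rintro s ⟨h1, h2⟩
    rw [consF_single]
    split_ifs with h
    · exact Submodule.zero_mem _
    · refine single_mem_supported _ _ ⟨by simp [Finset.card_insert_of_notMem h, h1], ?_⟩
      intro b hb
      rcases Finset.mem_insert.1 hb with rfl | hb
      · simp
      · simp [h2 b hb]

end algebra

end

end AGC

namespace AGC

noncomputable section

open Finsupp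

section fill
variable {X : Type*} [MetricSpace X]

lemma fill (σ : X → X → ℝ → X) (hσ : IsCCC σ) (p : X) (e : ℝ) (he : 0 < e)
    (Z : Set (List X)) (hZ : ∀ l ∈ Z, ∀ x ∈ l, ∀ y ∈ l, dist x y < e)
    (z : LC X) (hz : z ∈ supported (ZMod 2) (ZMod 2) Z) (hdz : dB z = 0) :
    ∃ y : LC X, dB y = z ∧ y ∈ supported (ZMod 2) (ZMod 2) {l' : List X |
      (∃ l ∈ Z, l'.length = l.length + 1 ∧ ∀ x' ∈ l', x' = p ∨
        ∃ x ∈ l, ∃ t ∈ Set.Icc (0 : ℝ) 1, x' = σ p x t) ∧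
      ∀ x ∈ l', ∀ y ∈ l', dist x y < e} := by
  classical
  obtain ⟨⟨-, h0, h1, hgeo⟩, -, hcon⟩ := hσ
  rw [mem_supported] at hz
  have hev : ∀ᶠ N : ℕ in Filter.atTop, ∀ l ∈ z.support, ∀ x ∈ l.toFinset, ∀ y ∈ l.toFinset,
      dist x y + dist p y / N < e := by
    rw [Filter.eventually_all_finset]
    intro l hl
    rw [Filter.eventually_all_finset]
    intro x hx
    rw [Filter.eventually_all_finset]
    intro y hy
    have h := hZ l (hz hl) x (by simpa using hx) y (by simpa using hy)
    have ht : Filter.Tendsto (fun N : ℕ => dist x y + dist p y / N) Filter.atTop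
        (nhds (dist x y + 0)) :=
      tendsto_const_nhds.add (tendsto_const_div_atTop_nhds_zero_nat _)
    rw [add_zero] at ht
    exact ht.eventually_lt_const h
  obtain ⟨N, hN, hNpos⟩ := (hev.and (Filter.eventually_gt_atTop 0)).exists
  have hNr : (0 : ℝ) < N := by exact_mod_cast hNpos
  set h : ℕ → X → X := fun i x => σ p x (i / N) with hdef
  have hh0 : ∀ x, h 0 x = p := by intro x; simp [hdef, h0]
  have hhN : ∀ x, h N x = x := by
    intro x; simp only [hdef]; rw [div_self hNr.ne', h1]
  have hIcc : ∀ i ≤ N, ((i : ℝ) / N) ∈ Set.Icc (0 : ℝ) 1 := by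
    intro i hi
    refine ⟨by positivity, ?_⟩
    rw [div_le_one hNr]; exact_mod_cast hi
  have hlip : ∀ i ≤ N, ∀ x y, dist (h i x) (h i y) ≤ dist x y := by
    intro i hi x y
    refine (hcon p x p y _ (hIcc i hi)).trans ?_
    rw [dist_self, mul_zero, zero_add]
    exact mul_le_of_le_one_left dist_nonneg (hIcc i hi).2
  have hstep : ∀ i < N, ∀ y, dist (h i y) (h (i + 1) y) = dist p y / N := by
    intro i hi y
    simp only [hdef]
    rw [hgeo p y _ (hIcc i hi.le) _ (hIcc (i + 1) hi)]
    have : (i : ℝ) / N - ((i + 1 : ℕ) : ℝ) / N = - (1 / N) := by push_cast; ring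
    rw [this, abs_neg, abs_of_pos (by positivity)]
    ring
  refine ⟨prisms h N z + consL p (mapL (h 0) z), ?_, ?_⟩
  · have hf := prisms_formula h N z
    rw [hdz, map_zero, add_zero] at hf
    rw [map_add, hf, dB_consL, dB_mapL, hdz, map_zero, map_zero, sub_zero, sub_add_cancel]
    have : h N = id := funext hhN
    rw [this]
    exact eq_of_single (mapL id) LinearMap.id (by intro s; simp) z
  · refine Submodule.add_mem _ ?_ ?_
    · refine mem_of_supported (prisms h N) (↑z.support) _ ?_ ((mem_supported _ _).2 le_rfl)
      intro l hl
      refine supported_mono ?_ (prisms_supp h N l)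
      rintro l' ⟨i, hi, hne, hlen, hin, -⟩
      refine ⟨⟨l, hz hl, hlen, ?_⟩, ?_⟩
      · intro x' hx'
        obtain ⟨x, hx, rfl | rfl⟩ := hin x' hx'
        · exact Or.inr ⟨x, hx, _, hIcc i hi.le, rfl⟩
        · exact Or.inr ⟨x, hx, _, hIcc (i + 1) hi, rfl⟩
      · have hpos : ∀ y, 0 ≤ dist p y / N := fun y => by positivity
        intro x' hx' y' hy'
        obtain ⟨x, hx, hxx⟩ := hin x' hx'
        obtain ⟨y, hy, hyy⟩ := hin y' hy'
        have hb := hN l hl x (by simpa using hx) y (by simpa using hy)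
        have e1 := hlip i hi.le x y
        have e2 := hlip (i + 1) hi x y
        have e3 := hstep i hi y
        have e4 := hpos y
        rcases hxx with rfl | rfl <;> rcases hyy with rfl | rfl
        · linarith
        · have := dist_triangle (h i x) (h i y) (h (i + 1) y)
          linarith
        · have := dist_triangle (h (i + 1) x) (h (i + 1) y) (h i y)
          rw [dist_comm (h (i + 1) y)] at this
          linarith
        · linarith
    · refine mem_of_supported (consL p ∘ₗ mapL (h 0)) (↑z.support) _ ?_ ((mem_supported _ _).2 le_rfl)
      intro l hl
      rw [LinearMap.comp_apply, mapL_single, consL_single]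
      have hall : ∀ x' ∈ p :: l.map (h 0), x' = p := by
        intro x' hx'
        simp only [List.mem_cons, List.mem_map] at hx'
        rcases hx' with rfl | ⟨x, -, rfl⟩
        · rfl
        · exact hh0 x
      refine single_mem_supported _ _ ⟨⟨l, hz hl, by simp, fun x' hx' => Or.inl (hall x' hx')⟩, ?_⟩
      intro x hx y hy
      rw [hall x hx, hall y hy, dist_self]
      exact he

end fill

section uconstr
variable {X : Type*} [MetricSpace X] {ι : Type*} [DecidableEq ι]

/-- lists that are admissible in the image of a simplex -/
def Adm (pos : ι → X) (g : ι → ℝ) (s : Finset ι) : Set (List X) :=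
  {l | l.length = s.card ∧
    (∀ x ∈ l, ∀ c r, (∀ a ∈ s, dist (pos a) c ≤ r) → dist x c ≤ r) ∧
    (s.Nonempty → ∃ a ∈ s, ∀ x ∈ l, ∀ y ∈ l, dist x y < g a)}

open Classical in
def ufun (pos : ι → X) (g : ι → ℝ) (s : Finset ι) : LC X :=
  Finset.strongInduction (p := fun _ => LC X) (fun s ih => if s = ∅ then single [] 1 else
    if h : ∃ y : LC X, dB y = ∑ a ∈ s.attach, ih (s.erase a) (Finset.erase_ssubset a.2) ∧
      y ∈ supported (ZMod 2) (ZMod 2) (Adm pos g s) then h.choose else 0) s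

lemma ufun_empty (pos : ι → X) (g : ι → ℝ) : ufun pos g ∅ = single [] 1 := by
  rw [ufun, Finset.strongInduction_eq, if_pos rfl]

lemma ufun_spec (pos : ι → X) (g : ι → ℝ) (s : Finset ι) (hs : s ≠ ∅)
    (h : ∃ y : LC X, dB y = ∑ a ∈ s, ufun pos g (s.erase a) ∧
      y ∈ supported (ZMod 2) (ZMod 2) (Adm pos g s)) :
    dB (ufun pos g s) = ∑ a ∈ s, ufun pos g (s.erase a) ∧
      ufun pos g s ∈ supported (ZMod 2) (ZMod 2) (Adm pos g s) := by
  have h' := h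
  rw [← Finset.sum_attach] at h' ⊢
  have e : ufun pos g s = h'.choose := by
    rw [ufun, Finset.strongInduction_eq, if_neg hs]
    exact dif_pos h'
  rw [e]
  exact h'.choose_spec

lemma ufun_good (σ : X → X → ℝ → X) (hσ : IsCCC σ) (pos : ι → X) (g : ι → ℝ)
    (hg : ∀ a, 0 < g a) (s : Finset ι) :
    dB (ufun pos g s) = ∑ a ∈ s, ufun pos g (s.erase a) ∧
      ufun pos g s ∈ supported (ZMod 2) (ZMod 2) (Adm pos g s) := by
  induction s using Finset.strongInduction with
  | H s ih =>
  by_cases hs : s = ∅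
  · subst hs
    rw [ufun_empty]
    refine ⟨by simp [bdryList], single_mem_supported _ _ ?_⟩
    simp [Adm]
  · refine ufun_spec pos g s hs ?_
    have hne := Finset.nonempty_iff_ne_empty.2 hs
    obtain ⟨a0, ha0, hmax⟩ := s.exists_max_image g hne
    set u : FC ι →ₗ[ZMod 2] LC X := linearCombination (ZMod 2) (ufun pos g) with hu
    have hus : ∀ t, u (single t 1) = ufun pos g t := by intro t; simp [hu]
    have hdd : dB (∑ a ∈ s, ufun pos g (s.erase a)) = 0 := by
      have h1 : ∀ a ∈ s, dB (ufun pos g (s.erase a)) = u (dA (single (s.erase a) 1)) := by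
        intro a ha
        rw [(ih _ (Finset.erase_ssubset ha)).1, dA_single, map_sum]
        exact Finset.sum_congr rfl fun b _ => (hus _).symm
      rw [map_sum, Finset.sum_congr rfl h1, ← map_sum, ← map_sum, ← dA_single, dA_dA, map_zero]
    obtain ⟨y, hy, hys⟩ := fill σ hσ (pos a0) (g a0) (hg a0)
      {l | l.length + 1 = s.card ∧
        (∀ x ∈ l, ∀ c r, (∀ a ∈ s, dist (pos a) c ≤ r) → dist x c ≤ r) ∧
        ∀ x ∈ l, ∀ y ∈ l, dist x y < g a0} (fun l hl => hl.2.2)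
      (∑ a ∈ s, ufun pos g (s.erase a)) (by
        refine Submodule.sum_mem _ fun a ha => ?_
        refine supported_mono ?_ (ih _ (Finset.erase_ssubset ha)).2
        rintro l ⟨h1, h2, h3⟩
        have hc := Finset.card_erase_add_one ha
        refine ⟨by omega, fun x hx c r h => h2 x hx c r fun b hb => h b (Finset.mem_of_mem_erase hb),
          ?_⟩
        intro x hx y hy
        have : (s.erase a).Nonempty := by
          rw [← Finset.card_pos, ← h1]
          exact List.length_pos_of_mem hx
        obtain ⟨b, hb, hbb⟩ := h3 this
        exact (hbb x hx y hy).trans_le (hmax b (Finset.mem_of_mem_erase hb))) hdd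
    refine ⟨y, hy, supported_mono ?_ hys⟩
    rintro l' ⟨⟨l, ⟨h1, h2, h3⟩, hlen, hx'⟩, hd⟩
    refine ⟨by omega, ?_, fun _ => ⟨a0, ha0, hd⟩⟩
    intro x' hx c r h
    have hp := h a0 ha0
    rcases hx' x' hx with rfl | ⟨x, hxl, t, ht, rfl⟩
    · exact hp
    · have hxr := h2 x hxl c r h
      obtain ⟨⟨-, e0, e1, hgeo⟩, -, hcon⟩ := hσ
      have hcc : σ c c t = c := by
        have := hgeo c c t ht 0 ⟨le_rfl, zero_le_one⟩
        rw [dist_self, mul_zero, e0] at this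
        exact dist_eq_zero.1 this
      have := hcon (pos a0) x c c t ht
      rw [hcc] at this
      nlinarith [ht.1, ht.2]

end uconstr

end

end AGC

namespace AGC

universe u

lemma cover_exists {X : Type u} [MetricSpace X] [ProperSpace X] (hdim : FiniteCoveringDimension X)
    (o : X) : ∃ (ι : Type u) (pos : ι → X) (w : X → ι) (n : ℕ),
      (∀ x, dist (pos (w x)) x ≤ 2) ∧ (∀ c r, {a | dist (pos a) c ≤ r}.Finite) ∧
      ∀ ρ : ℝ, ∃ e : ℝ, 0 < e ∧ e ≤ 1 ∧ ∀ l : List X, (∀ x ∈ l, dist x o ≤ ρ) →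
        (∀ x ∈ l, ∀ y ∈ l, dist x y < e) →
        ∀ t : Finset ι, (∀ a ∈ t, a ∈ l.map w) → t.card ≤ n + 1 := by
  classical
  obtain ⟨n, hn⟩ := hdim
  obtain ⟨𝒱, hopen, hcov, hsub, hmult⟩ := hn (Set.range fun x : X => ball x 1)
    (by rintro _ ⟨x, rfl⟩; exact isOpen_ball)
    (by
      refine Set.eq_univ_of_forall fun x => ⟨ball x 1, ⟨x, rfl⟩, mem_ball_self one_pos⟩)
  have hfin : ∀ m : ℕ, ∃ (F : Set (Set X)) (δ : ℝ), F ⊆ 𝒱 ∧ F.Finite ∧ 0 < δ ∧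
      ∀ x ∈ closedBall o ((m : ℝ) + 1), ∃ V ∈ F, ball x δ ⊆ V := by
    intro m
    have hc := isCompact_closedBall o ((m : ℝ) + 1)
    obtain ⟨F, hF, hFf, hFc⟩ := hc.elim_finite_subcover_image (b := 𝒱) (c := id)
      (fun V hV => hopen V hV) (by
        simp only [id]; rw [← Set.sUnion_eq_biUnion, hcov]; exact Set.subset_univ _)
    obtain ⟨δ, hδ, h⟩ := lebesgue_number_lemma_of_metric_sUnion hc
      (fun V hV => hopen V (hF hV)) (by rw [Set.sUnion_eq_biUnion]; exact hFc)
    exact ⟨F, δ, hF, hFf, hδ, h⟩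
  choose F δ hFV hFf hδ hFδ using hfin
  have hW : ∀ x : X, ∃ V ∈ F ⌊dist x o⌋₊, ball x (δ ⌊dist x o⌋₊) ⊆ V := fun x =>
    hFδ _ x (by
      rw [mem_closedBall]
      exact (Nat.lt_floor_add_one _).le)
  choose W hWF hWb using hW
  have hxW : ∀ x, x ∈ W x := fun x => hWb x (mem_ball_self (hδ _))
  have hWV : ∀ x, W x ∈ 𝒱 := fun x => hFV _ (hWF x)
  have hWd : ∀ x, ∀ y ∈ W x, dist y x ≤ 2 := by
    intro x y hy
    obtain ⟨_, ⟨c, rfl⟩, hc⟩ := hsub _ (hWV x)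
    have h1 := mem_ball.1 (hc hy)
    have h2 := mem_ball.1 (hc (hxW x))
    have := dist_triangle_right y x c
    linarith
  have hne : ∀ a : Set.range W, a.1.Nonempty := by
    rintro ⟨_, x, rfl⟩; exact ⟨x, hxW x⟩
  have hbdd : ∀ ρ : ℝ, (W '' {x | dist x o ≤ ρ}).Finite := by
    intro ρ
    refine Set.Finite.subset (Set.Finite.biUnion (Set.finite_Iic ⌊ρ⌋₊) fun i _ => hFf i) ?_
    rintro _ ⟨x, hx, rfl⟩
    exact Set.mem_biUnion (Set.mem_Iic.2 (Nat.floor_mono hx)) (hWF x)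
  refine ⟨Set.range W, fun a => (hne a).some, Set.rangeFactorization W, n, ?_, ?_, ?_⟩
  · intro x
    exact hWd x _ (hne (Set.rangeFactorization W x)).some_mem
  · intro c r
    refine Set.Finite.subset (Set.Finite.preimage Subtype.val_injective.injOn
      (hbdd (2 + r + dist c o))) ?_
    rintro ⟨_, x, rfl⟩ hx
    refine ⟨x, ?_, rfl⟩
    have h1 := hWd x _ (hne ⟨W x, x, rfl⟩).some_mem
    have h2 : dist ((hne ⟨W x, x, rfl⟩).some) c ≤ r := hx
    have h3 := dist_triangle4_left x o ((hne ⟨W x, x, rfl⟩).some) c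
    have h4 := dist_triangle x ((hne ⟨W x, x, rfl⟩).some) c
    have h5 := dist_triangle x c o
    rw [dist_comm] at h1
    change dist x o ≤ _
    linarith
  · intro ρ
    have hmin : ∃ e : ℝ, 0 < e ∧ e ≤ 1 ∧ ∀ i ≤ ⌊ρ⌋₊, e ≤ δ i := by
      obtain ⟨i0, -, hi0⟩ := (Finset.range (⌊ρ⌋₊ + 1)).exists_min_image δ ⟨0, by simp⟩
      refine ⟨min 1 (δ i0), lt_min one_pos (hδ _), min_le_left _ _, fun i hi => ?_⟩
      exact (min_le_right _ _).trans (hi0 i (by simp; omega))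
    obtain ⟨e, he, he1, hei⟩ := hmin
    refine ⟨e, he, he1, ?_⟩
    intro l hl hd t ht
    rcases t.eq_empty_or_nonempty with rfl | ⟨a0, ha0⟩
    · simp
    obtain ⟨x0, hx0, -⟩ := List.mem_map.1 (ht a0 ha0)
    have hsubset : (t.image Subtype.val : Set (Set X)) ⊆ {V | V ∈ 𝒱 ∧ x0 ∈ V} := by
      intro V hV
      obtain ⟨a, ha, rfl⟩ := Finset.mem_image.1 (Finset.mem_coe.1 hV)
      obtain ⟨x, hx, rfl⟩ := List.mem_map.1 (ht a ha)
      refine ⟨hWV x, hWb x ?_⟩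
      rw [mem_ball]
      exact (hd x0 hx0 x hx).trans_le (hei _ (Nat.floor_mono (hl x hx)))
    have h1 := Set.ncard_le_ncard hsubset (hmult x0).1
    rw [Set.ncard_coe_finset, Finset.card_image_of_injective _ Subtype.val_injective] at h1
    exact h1.trans (hmult x0).2

end AGC

namespace AGC

open Filter Topology

section rays
variable {X : Type*} [MetricSpace X]

lemma ray_limit [ProperSpace X] (σ : X → X → ℝ → X) (hσ : IsCCC σ) (o x : X) (C : ℝ)
    (hno : ∀ ξ : ℝ → X, IsRay σ ξ → ξ 0 = o → ∀ t : ℝ, 0 ≤ t → C < dist (ξ t) x) :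
    ∃ R : ℝ, ∀ y, R < dist y x → ∀ t ∈ Set.Icc (0 : ℝ) 1, C < dist (σ o y t) x := by
  by_contra hcontra
  push Not at hcontra
  obtain ⟨⟨-, h0, h1, hgeo⟩, hcons, hcon⟩ := hσ
  have hch : ∀ n : ℕ, ∃ y, (n : ℝ) < dist y x ∧ ∃ t ∈ Set.Icc (0 : ℝ) 1, dist (σ o y t) x ≤ C :=
    fun n => hcontra n
  choose y hy t ht htC using hch
  set L : ℕ → ℝ := fun n => dist o (y n) with hL
  have hLt : Tendsto L atTop atTop := by
    refine tendsto_atTop_mono (f := fun n : ℕ => (n : ℝ) - dist o x) ?_ ?_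
    · intro n
      have := dist_triangle (y n) o x
      rw [dist_comm (y n) o] at this
      have := hy n
      simp only [hL]
      linarith
    · exact tendsto_atTop_add_const_right _ _ tendsto_natCast_atTop_atTop
  set U : Ultrafilter ℕ := hyperfilter ℕ with hU
  have hUle : (U : Filter ℕ) ≤ atTop := Nat.hyperfilter_le_atTop
  have hLU : ∀ c : ℝ, ∀ᶠ n in (U : Filter ℕ), c < L n ∧ 0 < L n := fun c =>
    hUle ((hLt.eventually_gt_atTop c).and (hLt.eventually_gt_atTop 0))
  set γ : ℕ → ℝ → X := fun n s => σ o (y n) (s / L n) with hγ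
  have hγd : ∀ n s s', 0 < L n → 0 ≤ s → s ≤ L n → 0 ≤ s' → s' ≤ L n →
      dist (γ n s) (γ n s') = |s - s'| := by
    intro n s s' hp a b c d
    simp only [hγ]
    rw [hgeo o (y n) _ ⟨by positivity, by rwa [div_le_one hp]⟩ _
      ⟨by positivity, by rwa [div_le_one hp]⟩, ← sub_div, abs_div, abs_of_pos hp]
    exact div_mul_cancel₀ _ hp.ne'
  have hγ0 : ∀ n, γ n 0 = o := by intro n; simp [hγ, h0]
  have hlim : ∀ s : ℝ, ∃ z, Tendsto (fun n => γ n (max s 0)) (U : Filter ℕ) (𝓝 z) := by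
    intro s
    have hc := isCompact_closedBall o (max s 0)
    obtain ⟨z, -, hz⟩ := hc.ultrafilter_le_nhds (U.map fun n => γ n (max s 0)) (by
      rw [le_principal_iff]
      change ∀ᶠ n in (U : Filter ℕ), γ n (max s 0) ∈ closedBall o (max s 0)
      filter_upwards [hLU (max s 0)] with n hn
      rw [mem_closedBall, ← hγ0 n, hγd n _ _ hn.2 (le_max_right _ _) hn.1.le le_rfl hn.2.le,
        sub_zero, abs_of_nonneg (le_max_right _ _)])
    exact ⟨z, hz⟩
  choose ξ hξ using hlim
  have hξ' : ∀ s, 0 ≤ s → Tendsto (fun n => γ n s) (U : Filter ℕ) (𝓝 (ξ s)) := by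
    intro s hs
    have := hξ s
    rwa [max_eq_left hs] at this
  have hξ0 : ξ 0 = o := by
    refine tendsto_nhds_unique (hξ' 0 le_rfl) ?_
    simp only [hγ0]
    exact tendsto_const_nhds
  have hray : IsRay σ ξ := by
    refine ⟨?_, ?_, ?_⟩
    · intro s hs
      refine tendsto_nhds_unique (hξ s) ?_
      rw [max_eq_right hs]
      exact hξ' 0 le_rfl
    · intro s s' hs hs'
      refine tendsto_nhds_unique ((hξ' s hs).dist (hξ' s' hs')) ?_
      refine tendsto_const_nhds.congr' ?_
      filter_upwards [hLU s, hLU s'] with n hn hn'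
      exact (hγd n s s' hn.2 hs hn.1.le hs' hn'.1.le).symm
    · intro s hs r hr
      rw [hξ0]
      refine tendsto_nhds_unique ?_ (hξ' (r * s) (mul_nonneg hr.1 hs))
      have hlip : Tendsto (fun n => σ o (γ n s) r) (U : Filter ℕ) (𝓝 (σ o (ξ s) r)) := by
        rw [tendsto_iff_dist_tendsto_zero]
        refine squeeze_zero (fun _ => dist_nonneg) (fun n => ?_)
          (tendsto_iff_dist_tendsto_zero.1 (hξ' s hs))
        refine (hcon o (γ n s) o (ξ s) r hr).trans ?_
        rw [dist_self, mul_zero, zero_add]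
        exact mul_le_of_le_one_left dist_nonneg hr.2
      refine hlip.congr' ?_
      filter_upwards [hLU s] with n hn
      have := hcons o (y n) 0 (s / L n) r le_rfl (div_nonneg hs hn.2.le)
        (by rw [div_le_one hn.2]; exact hn.1.le) hr
      rw [h0] at this
      simp only [hγ]
      rw [this]
      congr 1
      ring
  have hs : ∀ n, t n * L n ∈ Set.Icc (0 : ℝ) (C + dist o x) := by
    intro n
    refine ⟨mul_nonneg (ht n).1 dist_nonneg, ?_⟩
    have e1 := hgeo o (y n) (t n) (ht n) 0 ⟨le_rfl, zero_le_one⟩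
    rw [h0, sub_zero, abs_of_nonneg (ht n).1] at e1
    have e2 := dist_triangle_right (σ o (y n) (t n)) o x
    have := htC n
    simp only [hL]
    linarith
  obtain ⟨s, hsI, hsl⟩ := (isCompact_Icc (a := (0 : ℝ)) (b := C + dist o x)).ultrafilter_le_nhds
    (U.map fun n => t n * L n) (by
      rw [le_principal_iff]
      exact Filter.mem_map.2 (Filter.univ_mem' hs))
  have hsl' : Tendsto (fun n => t n * L n) (U : Filter ℕ) (𝓝 s) := hsl
  have hfinal : dist (ξ s) x ≤ C := by
    have hT : Tendsto (fun n => dist (γ n s) x - |s - t n * L n|) (U : Filter ℕ)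
        (𝓝 (dist (ξ s) x - |s - s|)) :=
      ((hξ' s hsI.1).dist tendsto_const_nhds).sub ((tendsto_const_nhds.sub hsl').abs)
    rw [sub_self, abs_zero, sub_zero] at hT
    refine le_of_tendsto hT ?_
    filter_upwards [hLU s] with n hn
    have e1 := hγd n s (t n * L n) hn.2 hsI.1 hn.1.le (hs n).1
      (mul_le_of_le_one_left hn.2.le (ht n).2)
    have e2 : γ n (t n * L n) = σ o (y n) (t n) := by
      simp only [hγ]; rw [mul_div_cancel_right₀ _ hn.2.ne']
    rw [e2] at e1
    have := dist_triangle (γ n s) (σ o (y n) (t n)) x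
    have := htC n
    linarith
  exact absurd (hno ξ hray hξ0 s hsI.1) (not_lt.2 hfinal)

/-- the properties of a discrete contraction used in the argument -/
def Contr (h : ℕ → X → X) (b c : X) (r R : ℝ) : Prop :=
  r < dist b c ∧ (∀ x, h 0 x = b) ∧ (∀ i x y, dist (h i x) (h i y) ≤ 2 * dist x y) ∧
  (∀ i x, dist (h i x) (h (i + 1) x) ≤ 1) ∧
  (∀ i x, R < dist x c → r < dist (h i x) c) ∧
  ∀ ρ : ℝ, ∃ N : ℕ, ∀ x, dist x c ≤ ρ → h N x = x

lemma contr_exists (σ : X → X → ℝ → X) (hσ : IsCCC σ) (b c : X) (r R : ℝ) (hb : r < dist b c)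
    (hR : ∀ y, R < dist y c → ∀ t ∈ Set.Icc (0 : ℝ) 1, r < dist (σ b y t) c) :
    ∃ h, Contr h b c r R := by
  obtain ⟨⟨-, h0, h1, hgeo⟩, hcons, hcon⟩ := hσ
  set m : ℕ → X → ℝ := fun i x => min 1 (i / dist b x) with hm
  have hmI : ∀ i x, m i x ∈ Set.Icc (0 : ℝ) 1 := fun i x =>
    ⟨le_min zero_le_one (by positivity), min_le_left _ _⟩
  have hmd : ∀ i x, m i x * dist b x = min (dist b x) i := by
    intro i x
    rcases (dist_nonneg (x := b) (y := x)).eq_or_lt with h | h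
    · rw [← h]; simp
    · simp only [hm]
      rw [min_mul_of_nonneg _ _ h.le, one_mul, div_mul_cancel₀ _ h.ne']
  refine ⟨fun i x => σ b x (m i x), hb, ?_, ?_, ?_, ?_, ?_⟩
  · intro x
    simp [hm, h0]
  · have key : ∀ i x y, dist b x ≤ dist b y →
        dist (σ b x (m i x)) (σ b y (m i y)) ≤ 2 * dist x y := by
      intro i x y hxy
      have e1 := hcon b x b y (m i x) (hmI i x)
      rw [dist_self, mul_zero, zero_add] at e1
      have e2 := hgeo b y (m i x) (hmI i x) (m i y) (hmI i y)
      have e3 := dist_triangle (σ b x (m i x)) (σ b y (m i x)) (σ b y (m i y))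
      have e4 : m i x * dist x y ≤ dist x y := mul_le_of_le_one_left dist_nonneg (hmI i x).2
      have e5 : dist b y ≤ dist b x + dist x y := dist_triangle _ _ _
      have e6 : |m i x - m i y| * dist b y ≤ dist b y - dist b x := by
        rw [← abs_of_nonneg (dist_nonneg (x := b) (y := y)), ← abs_mul,
          abs_of_nonneg (dist_nonneg (x := b) (y := y)), sub_mul, hmd i y]
        rcases (dist_nonneg (x := b) (y := x)).eq_or_lt with h | h
        · have hm0 : m i x = 0 := by simp [hm, ← h]
          rw [hm0, ← h, zero_mul, zero_sub, abs_neg, sub_zero, abs_of_nonneg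
            (le_min dist_nonneg (Nat.cast_nonneg _))]
          exact min_le_left _ _
        · rcases le_total (dist b x) i with hi | hi
          · have hm1 : m i x = 1 := by
              simp only [hm]; exact min_eq_left (by rwa [one_le_div h])
            rw [hm1, one_mul, abs_of_nonneg (sub_nonneg.2 (min_le_left _ _))]
            have := le_min hxy hi
            linarith
          · have hm1 : m i x = i / dist b x := by
              simp only [hm]; exact min_eq_right (by rwa [div_le_one h])
            rw [min_eq_right (hi.trans hxy)]
            have e7 : m i x * dist b y - i = m i x * (dist b y - dist b x) := by
              rw [hm1]; field_simp
            rw [e7, abs_of_nonneg (mul_nonneg (hmI i x).1 (sub_nonneg.2 hxy))]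
            exact mul_le_of_le_one_left (sub_nonneg.2 hxy) (hmI i x).2
      linarith
    intro i x y
    rcases le_total (dist b x) (dist b y) with h | h
    · exact key i x y h
    · rw [dist_comm, dist_comm x]; exact key i y x h
  · intro i x
    change dist (σ b x (m i x)) (σ b x (m (i + 1) x)) ≤ 1
    rw [hgeo b x _ (hmI i x) _ (hmI (i + 1) x),
      ← abs_of_nonneg (dist_nonneg (x := b) (y := x)), ← abs_mul, sub_mul, hmd, hmd]
    refine (abs_min_sub_min_le_max _ _ _ _).trans ?_
    simp
  · intro i x hx
    exact hR x hx _ (hmI i x)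
  · intro ρ
    obtain ⟨N, hN⟩ := exists_nat_ge (ρ + dist b c)
    refine ⟨N, fun x hx => ?_⟩
    rcases (dist_nonneg (x := b) (y := x)).eq_or_lt with h | h
    · have hbx := dist_eq_zero.1 h.symm
      simp [hm, h0, hbx]
    · have : m N x = 1 := by
        simp only [hm]
        refine min_eq_left ?_
        rw [one_le_div h]
        have := dist_triangle_right b x c
        linarith
      simp only [this, h1]

lemma kill [ProperSpace X] {G : Type*} [Group G] [MulAction G X]
    (σ : X → X → ℝ → X) (hσ : IsCCC σ)
    (hiso : ∀ g : G, Isometry (fun x : X => g • x))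
    (hcocompact : ∃ K : Set X, IsCompact K ∧ ∀ x : X, ∃ g : G, x ∈ g • K)
    (o : X) (ξ₀ : ℝ → X) (hξ₀ : IsRay σ ξ₀) (hξo : ξ₀ 0 = o)
    (hno : ∀ C : ℝ, 0 ≤ C → ∃ x : X, ∀ ξ : ℝ → X, IsRay σ ξ → ξ 0 = o →
      ∀ t : ℝ, 0 ≤ t → C < dist (ξ t) x) :
    ∀ r : ℝ, 0 ≤ r → ∃ R : ℝ, ∀ c : X, ∃ h b, Contr h b c r R := by
  intro r hr
  obtain ⟨K, hK, hKc⟩ := hcocompact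
  obtain ⟨D, hD⟩ := Metric.isBounded_iff.1 hK.isBounded
  obtain ⟨x, hx⟩ := hno (r + |D|) (by positivity)
  obtain ⟨R, hR⟩ := ray_limit σ hσ o x _ hx
  have hox : r + |D| < dist o x := by
    have := hx ξ₀ hξ₀ hξo 0 le_rfl
    rwa [hξo] at this
  obtain ⟨h, -, hh0, hh1, hh2, hh3, hh4⟩ := contr_exists σ hσ o x _ R hox hR
  refine ⟨R + |D|, fun c => ?_⟩
  obtain ⟨g1, k1, hk1, hg1⟩ := hKc x
  obtain ⟨g2, k2, hk2, hg2⟩ := hKc c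
  set g : G := g2 * g1⁻¹ with hg
  have hd : ∀ (g : G) (x y : X), dist (g • x) (g • y) = dist x y := fun g x y => (hiso g).dist_eq x y
  have hgx : dist (g • x) c ≤ |D| := by
    have e1 : g • x = g2 • k1 := by
      rw [← hg1, hg, mul_smul]
      simp
    have e2 : c = g2 • k2 := hg2.symm
    rw [e1, e2, hd]
    exact (hD hk1 hk2).trans (le_abs_self D)
  have hdi : ∀ y z : X, dist (g • y) z = dist y (g⁻¹ • z) := by
    intro y z
    rw [← hd g y (g⁻¹ • z), smul_inv_smul]
  have hgc : dist x (g⁻¹ • c) ≤ |D| := by rw [← hdi]; exact hgx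
  refine ⟨fun i y => g • h i (g⁻¹ • y), g • o, ?_, ?_, ?_, ?_, ?_, ?_⟩
  · rw [hdi]
    have := dist_triangle_right o x (g⁻¹ • c)
    linarith
  · intro y; simp only [hh0]
  · intro i y z
    rw [hd]
    refine (hh1 i _ _).trans ?_
    rw [hd]
  · intro i y
    rw [hd]
    exact hh2 _ _
  · intro i y hy
    rw [hdi]
    have e1 : R < dist (g⁻¹ • y) x := by
      rw [← hd g⁻¹] at hy
      have := dist_triangle (g⁻¹ • y) x (g⁻¹ • c)
      linarith
    have e2 := hh3 i _ e1
    have := dist_triangle_right (h i (g⁻¹ • y)) x (g⁻¹ • c)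
    linarith
  · intro ρ
    obtain ⟨N, hN⟩ := hh4 (ρ + |D|)
    refine ⟨N, fun y hy => ?_⟩
    change g • h N (g⁻¹ • y) = y
    rw [hN, smul_inv_smul]
    rw [← hd g⁻¹] at hy
    have := dist_triangle_right (g⁻¹ • y) x (g⁻¹ • c)
    linarith

end rays

end AGC

namespace AGC

noncomputable section

open Finsupp

section core

lemma eq_on_supported {γ M : Type*} [AddCommMonoid M] [Module (ZMod 2) M]
    (T T' : (γ →₀ ZMod 2) →ₗ[ZMod 2] M) (Z : Set γ)
    (h : ∀ s ∈ Z, T (single s 1) = T' (single s 1))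
    {x : γ →₀ ZMod 2} (hx : x ∈ supported (ZMod 2) (ZMod 2) Z) : T x = T' x := by
  rw [supported_eq_span_single] at hx
  induction hx using Submodule.span_induction with
  | mem x hx => obtain ⟨s, hs, rfl⟩ := hx; exact h s hs
  | zero => simp
  | add x y _ _ hx hy => rw [map_add, map_add, hx, hy]
  | smul a x _ hx => rw [map_smul, map_smul, hx]

lemma exists_single_ne {γ M : Type*} [AddCommMonoid M] [Module (ZMod 2) M]
    (T : (γ →₀ ZMod 2) →ₗ[ZMod 2] M) (Z : Set γ)
    {x : γ →₀ ZMod 2} (hx : x ∈ supported (ZMod 2) (ZMod 2) Z) (hT : T x ≠ 0) :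
    ∃ s ∈ Z, T (single s 1) ≠ 0 := by
  by_contra hc
  push Not at hc
  refine hT ?_
  have := eq_on_supported T 0 Z (fun s hs => by rw [hc s hs, LinearMap.zero_apply]) hx
  rwa [LinearMap.zero_apply] at this

lemma mem_supported_of {γ : Type*} {Z : Set γ} {x : γ →₀ ZMod 2} (h : ∀ s, x s ≠ 0 → s ∈ Z) :
    x ∈ supported (ZMod 2) (ZMod 2) Z := by
  rw [mem_supported]
  intro s hs
  exact h s (mem_support_iff.1 hs)

lemma of_mem_supported {γ : Type*} {Z : Set γ} {x : γ →₀ ZMod 2}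
    (hx : x ∈ supported (ZMod 2) (ZMod 2) Z) {s : γ} (h : x s ≠ 0) : s ∈ Z :=
  (mem_supported _ _).1 hx (mem_support_iff.2 h)

variable {X : Type*} [MetricSpace X] {ι : Type*} [DecidableEq ι]

/-- chains of given cardinality -/
def AD (ι : Type*) (c : ℕ) : Submodule (ZMod 2) (FC ι) :=
  supported (ZMod 2) (ZMod 2) {s : Finset ι | s.card = c}

/-- chains in a ball -/
def AC (pos : ι → X) (p : X) (r : ℝ) : Submodule (ZMod 2) (FC ι) :=
  supported (ZMod 2) (ZMod 2) {s : Finset ι | ∀ a ∈ s, dist (pos a) p ≤ r}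

def Ctrl (pos : ι → X) (T : FC ι →ₗ[ZMod 2] FC ι) : Prop :=
  ∀ r : ℝ, 0 ≤ r → ∃ R : ℝ, 0 ≤ R ∧ ∀ p, ∀ x ∈ AC pos p r, T x ∈ AC pos p R

lemma AC_mono (pos : ι → X) (p : X) {r R : ℝ} (h : r ≤ R) : AC pos p r ≤ AC pos p R :=
  supported_mono fun _ hs a ha => (hs a ha).trans h

lemma Ctrl.comp {pos : ι → X} {T T' : FC ι →ₗ[ZMod 2] FC ι} (h : Ctrl pos T) (h' : Ctrl pos T') :
    Ctrl pos (T ∘ₗ T') := by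
  intro r hr
  obtain ⟨R', hR', h1⟩ := h' r hr
  obtain ⟨R, hR, h2⟩ := h R' hR'
  exact ⟨R, hR, fun p x hx => h2 p _ (h1 p x hx)⟩

lemma Ctrl.add {pos : ι → X} {T T' : FC ι →ₗ[ZMod 2] FC ι} (h : Ctrl pos T) (h' : Ctrl pos T') :
    Ctrl pos (T + T') := by
  intro r hr
  obtain ⟨R', hR', h1⟩ := h' r hr
  obtain ⟨R, hR, h2⟩ := h r hr
  exact ⟨max R R', le_max_of_le_left hR, fun p x hx => Submodule.add_mem _
    (AC_mono pos p (le_max_left _ _) (h2 p x hx)) (AC_mono pos p (le_max_right _ _) (h1 p x hx))⟩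

lemma Ctrl.sub {pos : ι → X} {T T' : FC ι →ₗ[ZMod 2] FC ι} (h : Ctrl pos T) (h' : Ctrl pos T') :
    Ctrl pos (T - T') := by
  intro r hr
  obtain ⟨R', hR', h1⟩ := h' r hr
  obtain ⟨R, hR, h2⟩ := h r hr
  exact ⟨max R R', le_max_of_le_left hR, fun p x hx => Submodule.sub_mem _
    (AC_mono pos p (le_max_left _ _) (h2 p x hx)) (AC_mono pos p (le_max_right _ _) (h1 p x hx))⟩

lemma ctrl_dA (pos : ι → X) : Ctrl pos (dA : FC ι →ₗ[ZMod 2] FC ι) := by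
  intro r hr
  refine ⟨r, hr, fun p x hx => mem_of_supported dA _ _ ?_ hx⟩
  intro s hs
  rw [dA_single]
  refine Submodule.sum_mem _ fun a _ => single_mem_supported _ _ ?_
  intro b hb
  exact hs b (Finset.mem_of_mem_erase hb)

lemma dA_mem_AD {c : ℕ} {x : FC ι} (hx : x ∈ AD ι (c + 1)) : dA x ∈ AD ι c := by
  refine mem_of_supported dA _ _ ?_ hx
  intro s hs
  rw [dA_single]
  refine Submodule.sum_mem _ fun a ha => single_mem_supported _ _ ?_
  have := Finset.card_erase_add_one ha
  have hs' : s.card = c + 1 := hs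
  change (s.erase a).card = c
  omega

/-- from lists of points to simplices -/
def wq (w : X → ι) : LC X →ₗ[ZMod 2] FC ι := q ∘ₗ mapL w

lemma dA_wq (w : X → ι) (x : LC X) : dA (wq w x) = wq w (dB x) := by
  rw [wq, LinearMap.comp_apply, LinearMap.comp_apply, dA_q, dB_mapL]

lemma wq_supp (w : X → ι) (l : List X) : wq w (single l 1) ∈ supported (ZMod 2) (ZMod 2)
    {s : Finset ι | s.card = l.length ∧ ∀ a ∈ s, a ∈ l.map w} := by
  rw [wq, LinearMap.comp_apply, mapL_single, q_single]
  simpa using qList_supp (l.map w)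

/-- The main local step: killing cocycles. -/
lemma psi_exists (pos : ι → X) (w : X → ι) (hw : ∀ x, dist (pos (w x)) x ≤ 2)
    (hkill : ∀ r : ℝ, 0 ≤ r → ∃ R : ℝ, ∀ c : X, ∃ h b, Contr h b c r R)
    (u : FC ι →ₗ[ZMod 2] LC X) (g : ι → ℝ) (hg : ∀ a, g a ≤ 1)
    (hus : ∀ s, u (single s 1) ∈ supported (ZMod 2) (ZMod 2) (Adm pos g s))
    (hu0 : u (single ∅ 1) = single [] 1)
    (hud : ∀ x, dB (u x) = u (dA x))
    (D : FC ι →ₗ[ZMod 2] FC ι) (hDc : Ctrl pos D) (hDd : ∀ x, dA (D x) = D (dA x))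
    (d : ℕ) (hD0 : ∀ x ∈ AD ι (d + 2), D x = 0) :
    ∃ R1 : ℝ, 0 ≤ R1 ∧ ∀ τ : Finset ι, ∃ ψ : FC ι →ₗ[ZMod 2] ZMod 2, τ.card = d + 1 →
      (∀ s : Finset ι, s.card = d + 1 →
        (D (wq w (u (single s 1)))) τ = ψ (dA (single s 1))) ∧
      (∀ (s : Finset ι) p r, (∀ a ∈ s, dist (pos a) p ≤ r) → ψ (single s 1) ≠ 0 →
        ∀ a ∈ τ, dist (pos a) p ≤ r + R1) ∧
      ψ (single ∅ 1) = 0 := by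
  obtain ⟨r0, hr0, hD⟩ := hDc 5 (by norm_num)
  obtain ⟨R, hR⟩ := hkill r0 hr0
  have hloc : ∀ l' : List X, (∀ x ∈ l', ∀ y ∈ l', dist x y ≤ 3) → ∀ x' ∈ l',
      D (wq w (single l' 1)) ∈ AC pos x' r0 := by
    intro l' hl' x' hx'
    refine hD x' _ (supported_mono ?_ (wq_supp w l'))
    rintro s ⟨-, hs⟩ a ha
    obtain ⟨y, hy, rfl⟩ := List.mem_map.1 (hs a ha)
    have e1 := hw y
    have e2 := hl' y hy x' hx'
    have e3 := dist_triangle (pos (w y)) y x'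
    linarith
  have hadm : ∀ s, ∀ l ∈ Adm pos g s, ∀ x ∈ l, ∀ y ∈ l, dist x y ≤ 1 := by
    rintro s l ⟨h1, h2, h3⟩ x hx y hy
    have hne : s.Nonempty := by
      rw [← Finset.card_pos, ← h1]
      exact List.length_pos_of_mem hx
    obtain ⟨a, -, ha⟩ := h3 hne
    exact (ha x hx y hy).le.trans (hg a)
  refine ⟨|R| + 2 * r0, by positivity, fun τ => ?_⟩
  rcases τ.eq_empty_or_nonempty with rfl | ⟨a0, ha0⟩
  · exact ⟨0, fun h => by simp at h⟩
  obtain ⟨h, b, hb, hh0, hh1, hh2, hh3, hh4⟩ := hR (pos a0)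
  have hlz : ∀ l' : List X, (∀ x ∈ l', ∀ y ∈ l', dist x y ≤ 3) → ∀ x' ∈ l',
      r0 < dist x' (pos a0) → (D (wq w (single l' 1))) τ = 0 := by
    intro l' hl' x' hx' hlt
    by_contra hne
    have := of_mem_supported (hloc l' hl' x' hx') hne a0 ha0
    rw [dist_comm] at this
    linarith
  obtain ⟨N, hN⟩ := hh4 (|R| + 1)
  obtain ⟨Φ, hΦa⟩ : ∃ Φ : LC X →ₗ[ZMod 2] ZMod 2, ∀ x, Φ x = (D (wq w x)) τ :=
    ⟨lapply τ ∘ₗ D ∘ₗ wq w, fun _ => rfl⟩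
  refine ⟨Φ ∘ₗ prisms h N ∘ₗ u, fun hτ => ⟨?_, ?_, ?_⟩⟩
  · intro s hs
    have hA : Φ (mapL (h 0) (u (single s 1))) = 0 := by
      have := eq_on_supported (Φ ∘ₗ mapL (h 0)) 0 _ ?_ (hus s)
      · simpa using this
      rintro l hl
      rw [LinearMap.comp_apply, mapL_single, LinearMap.zero_apply, hΦa]
      have hlen : l.length = d + 1 := hl.1.trans hs
      have hne : l ≠ [] := by rintro rfl; simp at hlen
      obtain ⟨x, hx⟩ := List.exists_mem_of_ne_nil l hne
      refine hlz _ ?_ (h 0 x) (List.mem_map_of_mem hx) (by rwa [hh0])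
      intro y hy z hz
      obtain ⟨y', -, rfl⟩ := List.mem_map.1 hy
      obtain ⟨z', -, rfl⟩ := List.mem_map.1 hz
      rw [hh0, hh0, dist_self]; norm_num
    have hB : Φ (mapL (h N) (u (single s 1))) = Φ (u (single s 1)) := by
      refine eq_on_supported (Φ ∘ₗ mapL (h N)) Φ _ ?_ (hus s)
      intro l hl
      rw [LinearMap.comp_apply, mapL_single]
      have hd := hadm s l hl
      by_cases hall : ∀ x ∈ l, dist x (pos a0) ≤ |R| + 1
      · have : l.map (h N) = l := by
          conv_rhs => rw [← List.map_id l]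
          exact List.map_congr_left fun x hx => hN x (hall x hx)
        rw [this]
      · push Not at hall
        obtain ⟨x, hx, hxR⟩ := hall
        have hRx : R < dist x (pos a0) := by
          have := le_abs_self R; linarith
        have e1 : r0 < dist x (pos a0) := by
          obtain ⟨N', hN'⟩ := hh4 (dist x (pos a0))
          have := hh3 N' x hRx
          rwa [hN' x le_rfl] at this
        rw [hΦa, hΦa, hlz l (fun y hy z hz => (hd y hy z hz).trans (by norm_num)) x hx e1]
        refine hlz _ ?_ (h N x) (List.mem_map_of_mem hx) (hh3 N x hRx)
        intro y hy z hz
        obtain ⟨y', hy', rfl⟩ := List.mem_map.1 hy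
        obtain ⟨z', hz', rfl⟩ := List.mem_map.1 hz
        have e2 := hh1 N y' z'
        have e3 := hd y' hy' z' hz'
        linarith
    have hC : Φ (dB (prisms h N (u (single s 1)))) = 0 := by
      rw [hΦa, ← dA_wq, ← hDd]
      have hmem : wq w (prisms h N (u (single s 1))) ∈ AD ι (d + 2) := by
        refine mem_of_supported (wq w ∘ₗ prisms h N) _ _ ?_ (hus s)
        intro l hl
        rw [LinearMap.comp_apply]
        refine mem_of_supported (wq w) _ _ ?_ (prisms_supp h N l)
        rintro l' ⟨i, -, -, hlen, -⟩
        refine supported_mono ?_ (wq_supp w l')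
        rintro t ⟨ht, -⟩
        change t.card = d + 2
        rw [ht, hlen, hl.1, hs]
      rw [hD0 _ hmem, map_zero]
      rfl
    have hf := prisms_formula h N (u (single s 1))
    have hf' : prisms h N (dB (u (single s 1))) = mapL (h N) (u (single s 1))
        - mapL (h 0) (u (single s 1)) - dB (prisms h N (u (single s 1))) := by
      rw [← hf]; abel
    rw [LinearMap.comp_apply, LinearMap.comp_apply, ← hud, hf', map_sub, map_sub, hA, hB, hC,
      sub_zero, sub_zero, hΦa]
  · intro s p r hs hne a ha
    rw [LinearMap.comp_apply, LinearMap.comp_apply] at hne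
    obtain ⟨l, hl, hne1⟩ := exists_single_ne (Φ ∘ₗ prisms h N) _ (hus s) hne
    rw [LinearMap.comp_apply] at hne1
    obtain ⟨l', ⟨i, -, hlne, -, hin, hx2⟩, hne2⟩ := exists_single_ne Φ _ (prisms_supp h N l) hne1
    rw [hΦa] at hne2
    have hd := hadm s l hl
    obtain ⟨x, hx⟩ := List.exists_mem_of_ne_nil l hlne
    have hd' : ∀ y ∈ l', ∀ z ∈ l', dist y z ≤ 3 := by
      intro y' hy' z' hz'
      obtain ⟨y, hy, hyy⟩ := hin y' hy'
      obtain ⟨z, hz, hzz⟩ := hin z' hz'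
      have e1 := hd y hy z hz
      have e2 := hh1 i y z
      have e3 := hh1 (i + 1) y z
      have e4 := hh2 i z
      rcases hyy with rfl | rfl <;> rcases hzz with rfl | rfl
      · linarith
      · have := dist_triangle (h i y) (h i z) (h (i + 1) z)
        linarith
      · have := dist_triangle_right (h (i + 1) y) (h i z) (h (i + 1) z)
        linarith
      · linarith
    have hfin : ∃ j, h j x ∈ l' := by
      rcases hx2 x hx with hj | hj
      · exact ⟨_, hj⟩
      · exact ⟨_, hj⟩
    obtain ⟨j, hj⟩ := hfin
    have hclose := of_mem_supported (hloc l' hd' _ hj) hne2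
    have e1 := hclose a ha
    have e2 := hclose a0 ha0
    have e3 : dist x (pos a0) ≤ R := by
      by_contra hc
      have := hh3 j x (not_le.1 hc)
      rw [dist_comm] at this
      linarith
    have e4 := hl.2.1 x hx p r hs
    have e5 := dist_triangle_left (pos a) (pos a0) (h j x)
    rw [dist_comm (h j x), dist_comm (h j x)] at e5
    have e6 := dist_triangle_left (pos a0) p x
    have e7 := dist_triangle (pos a) (pos a0) p
    have e8 := le_abs_self R
    linarith
  · rw [LinearMap.comp_apply, LinearMap.comp_apply, hu0]
    have : prisms h N (single [] (1 : ZMod 2)) = 0 := by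
      simp [prisms, prismList]
    rw [this, map_zero]

/-- inductive statement -/
def PP (pos : ι → X) (j : ℕ) : Prop :=
  ∃ V S : FC ι →ₗ[ZMod 2] FC ι, Ctrl pos V ∧ (∀ c, ∀ x ∈ AD ι c, V x ∈ AD ι c) ∧
    (∀ x, dA (V x) = V (dA x)) ∧ V (single ∅ 1) = single ∅ 1 ∧
    Ctrl pos S ∧ (∀ c, ∀ x ∈ AD ι c, S x ∈ AD ι (c + 1)) ∧ S (single ∅ 1) = 0 ∧
    ∀ s : Finset ι, j ≤ s.card →
      V (single s 1) = dA (S (single s 1)) + S (dA (single s 1))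

lemma PP_step (pos : ι → X) (o : X) (hfin : ∀ c r, {a | dist (pos a) c ≤ r}.Finite)
    (w : X → ι) (hw : ∀ x, dist (pos (w x)) x ≤ 2)
    (hkill : ∀ r : ℝ, 0 ≤ r → ∃ R : ℝ, ∀ c : X, ∃ h b, Contr h b c r R)
    (u : FC ι →ₗ[ZMod 2] LC X) (g : ι → ℝ) (hg : ∀ a, g a ≤ 1)
    (hus : ∀ s, u (single s 1) ∈ supported (ZMod 2) (ZMod 2) (Adm pos g s))
    (hu0 : u (single ∅ 1) = single [] 1)
    (hud : ∀ x, dB (u x) = u (dA x))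
    (v : FC ι →ₗ[ZMod 2] FC ι) (hv : ∀ x, v x = wq w (u x)) (hvc : Ctrl pos v)
    (hvg : ∀ c, ∀ x ∈ AD ι c, v x ∈ AD ι c) (hvd : ∀ x, dA (v x) = v (dA x))
    (hv0 : v (single ∅ 1) = single ∅ 1)
    (d : ℕ) (h : PP pos (d + 2)) : PP pos (d + 1) := by
  obtain ⟨V, S, hVc, hVg, hVd, hV0, hSc, hSg, hS0, hVS⟩ := h
  set D : FC ι →ₗ[ZMod 2] FC ι := V - dA ∘ₗ S - S ∘ₗ dA with hDdef
  have hDa : ∀ x, D x = V x - dA (S x) - S (dA x) := fun x => rfl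
  have hDc : Ctrl pos D := (hVc.sub ((ctrl_dA pos).comp hSc)).sub (hSc.comp (ctrl_dA pos))
  have hDd : ∀ x, dA (D x) = D (dA x) := by
    intro x
    rw [hDa, hDa, map_sub, map_sub, dA_dA, dA_dA, hVd, map_zero, sub_zero, sub_zero]
  have hD0 : ∀ c, d + 2 ≤ c → ∀ x ∈ AD ι c, D x = 0 := by
    intro c hc x hx
    have := eq_on_supported D 0 _ ?_ hx
    · rwa [LinearMap.zero_apply] at this
    intro s hs
    have hs' : s.card = c := hs
    rw [LinearMap.zero_apply, hDa, hVS s (by omega)]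
    abel
  have hDg : ∀ x ∈ AD ι (d + 1), D x ∈ AD ι (d + 1) := by
    intro x hx
    rw [hDa]
    exact Submodule.sub_mem _ (Submodule.sub_mem _ (hVg _ _ hx) (dA_mem_AD (hSg _ _ hx)))
      (hSg _ _ (dA_mem_AD hx))
  obtain ⟨R1, hR1, hψ⟩ := psi_exists pos w hw hkill u g hg hus hu0 hud D hDc hDd d
    (hD0 (d + 2) le_rfl)
  choose ψ hψ using hψ
  have hfs : ∀ s : Finset ι, (Function.support fun τ : Finset ι =>
      if s.card = d ∧ τ.card = d + 1 then ψ τ (single s 1) else 0).Finite := by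
    intro s
    obtain ⟨r, hr⟩ : ∃ r, ∀ a ∈ s, dist (pos a) o ≤ r := by
      obtain ⟨r, hr⟩ := (s.image fun a => dist (pos a) o).exists_le
      exact ⟨r, fun a ha => hr _ (Finset.mem_image_of_mem _ ha)⟩
    refine Set.Finite.subset (hfin o (r + R1)).toFinset.powerset.finite_toSet ?_
    intro τ hτ
    rw [Function.mem_support] at hτ
    split_ifs at hτ with hc
    · rw [Finset.mem_coe, Finset.mem_powerset]
      intro a ha
      rw [Set.Finite.mem_toFinset]
      exact (hψ τ hc.2).2.1 s o r hr hτ a ha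
    · exact absurd rfl hτ
  set S2 : FC ι →ₗ[ZMod 2] FC ι :=
    linearCombination (ZMod 2) (fun s => ofSupportFinite _ (hfs s)) with hS2
  have hS2a : ∀ s τ : Finset ι, (S2 (single s 1)) τ =
      if s.card = d ∧ τ.card = d + 1 then ψ τ (single s 1) else 0 := by
    intro s τ
    rw [hS2, linearCombination_single, one_smul]
    rfl
  have hS2n : ∀ s : Finset ι, s.card ≠ d → S2 (single s 1) = 0 := by
    intro s hs
    ext τ
    rw [hS2a, if_neg (fun h => hs h.1)]
    rfl
  have hS2c : Ctrl pos S2 := by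
    intro r hr
    refine ⟨r + R1, by positivity, fun p x hx => mem_of_supported S2 _ _ ?_ hx⟩
    intro s hs
    refine mem_supported_of fun τ hτ => ?_
    rw [hS2a] at hτ
    split_ifs at hτ with hc
    · exact (hψ τ hc.2).2.1 s p r hs hτ
    · exact absurd rfl hτ
  have hS2g : ∀ c, ∀ x ∈ AD ι c, S2 x ∈ AD ι (c + 1) := by
    intro c x hx
    refine mem_of_supported S2 _ _ ?_ hx
    intro s hs
    refine mem_supported_of fun τ hτ => ?_
    rw [hS2a] at hτ
    have hs' : s.card = c := hs
    split_ifs at hτ with hc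
    · change τ.card = c + 1
      omega
    · exact absurd rfl hτ
  have hS20 : S2 (single ∅ 1) = 0 := by
    ext τ
    rw [hS2a]
    split_ifs with hc
    · rw [(hψ τ hc.2).2.2]; rfl
    · rfl
  refine ⟨V ∘ₗ v, S ∘ₗ v + S2, hVc.comp hvc, fun c x hx => hVg _ _ (hvg _ _ hx), ?_, ?_,
    (hSc.comp hvc).add hS2c, ?_, ?_, ?_⟩
  · intro x
    rw [LinearMap.comp_apply, LinearMap.comp_apply, hVd, hvd]
  · rw [LinearMap.comp_apply, hv0, hV0]
  · intro c x hx
    exact Submodule.add_mem _ (hSg _ _ (hvg _ _ hx)) (hS2g _ _ hx)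
  · rw [LinearMap.add_apply, LinearMap.comp_apply, hv0, hS0, hS20, add_zero]
  · intro s hs
    have hkey : D (v (single s 1)) = S2 (dA (single s 1)) := by
      have hsm : single s (1 : ZMod 2) ∈ AD ι s.card := single_mem_supported _ _ rfl
      rcases Nat.eq_or_lt_of_le hs with he | hlt
      · ext τ
        have hr : (S2 (dA (single s 1))) τ =
            ∑ a ∈ s, if τ.card = d + 1 then ψ τ (single (s.erase a) 1) else 0 := by
          rw [dA_single, map_sum, Finsupp.finsetSum_apply]
          refine Finset.sum_congr rfl fun a ha => ?_
          have := Finset.card_erase_add_one ha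
          rw [hS2a]
          have hd : (s.erase a).card = d := by omega
          simp only [hd, true_and]
        rw [hr]
        by_cases hτ : τ.card = d + 1
        · simp only [hτ, if_true]
          rw [← map_sum, ← dA_single, hv, (hψ τ hτ).1 s he.symm]
        · simp only [hτ, if_false, Finset.sum_const_zero]
          by_contra hne
          rw [← he] at hsm
          exact hτ (of_mem_supported (hDg _ (hvg _ _ hsm)) hne)
      · rw [hD0 s.card hlt _ (hvg _ _ hsm), dA_single, map_sum]
        refine (Finset.sum_eq_zero fun a ha => hS2n _ ?_).symm
        have := Finset.card_erase_add_one ha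
        omega
    rw [hDa, hvd] at hkey
    rw [LinearMap.comp_apply, LinearMap.add_apply, LinearMap.add_apply, LinearMap.comp_apply,
      LinearMap.comp_apply, hS2n s (by omega), ← hkey]
    rw [add_zero]
    abel

theorem core (σ : X → X → ℝ → X) (hσ : IsCCC σ) (pos : ι → X) (o : X) (w : X → ι) (n : ℕ)
    (hw : ∀ x, dist (pos (w x)) x ≤ 2) (hfin : ∀ c r, {a | dist (pos a) c ≤ r}.Finite)
    (hsmall : ∀ ρ : ℝ, ∃ e : ℝ, 0 < e ∧ e ≤ 1 ∧ ∀ l : List X, (∀ x ∈ l, dist x o ≤ ρ) →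
        (∀ x ∈ l, ∀ y ∈ l, dist x y < e) →
        ∀ t : Finset ι, (∀ a ∈ t, a ∈ l.map w) → t.card ≤ n + 1)
    (hkill : ∀ r : ℝ, 0 ≤ r → ∃ R : ℝ, ∀ c : X, ∃ h b, Contr h b c r R) : False := by
  choose e he he1 hel using hsmall
  set g : ι → ℝ := fun a => e (dist (pos a) o + 5) with hg
  have hg1 : ∀ a, g a ≤ 1 := fun a => he1 _
  have hgood := ufun_good σ hσ pos g (fun a => he _)
  set u : FC ι →ₗ[ZMod 2] LC X := linearCombination (ZMod 2) (ufun pos g) with hu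
  have hu1 : ∀ s, u (single s 1) = ufun pos g s := by
    intro s; rw [hu, linearCombination_single, one_smul]
  have hus : ∀ s, u (single s 1) ∈ supported (ZMod 2) (ZMod 2) (Adm pos g s) := by
    intro s; rw [hu1]; exact (hgood s).2
  have hu0 : u (single ∅ 1) = single [] 1 := by rw [hu1, ufun_empty]
  have hud : ∀ x, dB (u x) = u (dA x) := by
    intro x
    refine eq_of_single (dB ∘ₗ u) (u ∘ₗ dA) ?_ x
    intro s
    rw [LinearMap.comp_apply, LinearMap.comp_apply, hu1, (hgood s).1, dA_single, map_sum]
    exact Finset.sum_congr rfl fun a _ => (hu1 _).symm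
  obtain ⟨v, hv⟩ : ∃ v : FC ι →ₗ[ZMod 2] FC ι, ∀ x, v x = wq w (u x) :=
    ⟨wq w ∘ₗ u, fun _ => rfl⟩
  have hvs : ∀ s : Finset ι, v (single s 1) ∈ supported (ZMod 2) (ZMod 2)
      {t : Finset ι | t.card = s.card ∧ ∃ l ∈ Adm pos g s, ∀ a ∈ t, ∃ x ∈ l, a = w x} := by
    intro s
    rw [hv]
    refine mem_of_supported (wq w) _ _ ?_ (hus s)
    intro l hl
    refine supported_mono ?_ (wq_supp w l)
    rintro t ⟨ht, hta⟩
    refine ⟨ht.trans hl.1, l, hl, fun a ha => ?_⟩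
    obtain ⟨x, hx, rfl⟩ := List.mem_map.1 (hta a ha)
    exact ⟨x, hx, rfl⟩
  have hvc : Ctrl pos v := by
    intro r hr
    refine ⟨r + 2, by positivity, fun p x hx => mem_of_supported v _ _ ?_ hx⟩
    intro s hs
    refine supported_mono ?_ (hvs s)
    rintro t ⟨-, l, hl, hta⟩ a ha
    obtain ⟨x, hx, rfl⟩ := hta a ha
    have e1 := hl.2.1 x hx p r hs
    have e2 := hw x
    have e3 := dist_triangle (pos (w x)) x p
    linarith
  have hvg : ∀ c, ∀ x ∈ AD ι c, v x ∈ AD ι c := by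
    intro c x hx
    refine mem_of_supported v _ _ ?_ hx
    intro s hs
    refine supported_mono ?_ (hvs s)
    rintro t ⟨ht, -⟩
    exact ht.trans hs
  have hvd : ∀ x, dA (v x) = v (dA x) := by
    intro x; rw [hv, hv, dA_wq, hud]
  have hv0 : v (single ∅ 1) = single ∅ 1 := by
    rw [hv, hu0, wq, LinearMap.comp_apply, mapL_single, q_single]
    rfl
  have hvz : ∀ t : Finset ι, n + 2 ≤ t.card → (∀ a ∈ t, ∀ b ∈ t, dist (pos a) (pos b) ≤ 5) →
      v (single t 1) = 0 := by
    intro t ht hd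
    rw [hv]
    have := eq_on_supported (wq w) 0 _ ?_ (hus t)
    · rwa [LinearMap.zero_apply] at this
    rintro l ⟨hlen, hhull, hsm⟩
    rw [LinearMap.zero_apply]
    obtain ⟨a, ha, hla⟩ := hsm (Finset.card_pos.1 (by omega))
    by_contra hne
    obtain ⟨t', ht'⟩ := Finsupp.ne_iff.1 hne
    obtain ⟨hc, hm⟩ := of_mem_supported (wq_supp w l) ht'
    have := hel (dist (pos a) o + 5) l (fun x hx => by
      have e1 := hhull x hx (pos a) 5 (fun b hb => hd b hb a ha)
      have e2 := dist_triangle x (pos a) o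
      linarith) hla t' hm
    omega
  have hstart : PP pos (n + 1 + 1) := by
    refine ⟨v ∘ₗ v, 0, hvc.comp hvc, fun c x hx => hvg _ _ (hvg _ _ hx), ?_, ?_, ?_, ?_, ?_, ?_⟩
    · intro x; rw [LinearMap.comp_apply, LinearMap.comp_apply, hvd, hvd]
    · rw [LinearMap.comp_apply, hv0, hv0]
    · intro r hr
      exact ⟨r, hr, fun p x _ => Submodule.zero_mem _⟩
    · intro c x _
      exact Submodule.zero_mem _
    · rw [LinearMap.zero_apply]
    · intro s hs
      rw [LinearMap.zero_apply, LinearMap.zero_apply, map_zero, add_zero, LinearMap.comp_apply]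
      have := eq_on_supported v 0 _ ?_ (hvs s)
      · rwa [LinearMap.zero_apply] at this
      rintro t ⟨htc, l, hl, hta⟩
      rw [LinearMap.zero_apply]
      refine hvz t (by omega) ?_
      intro a ha b hb
      obtain ⟨x, hx, rfl⟩ := hta a ha
      obtain ⟨y, hy, rfl⟩ := hta b hb
      obtain ⟨a', -, hsm⟩ := hl.2.2 (Finset.card_pos.1 (by omega))
      have e1 := (hsm x hx y hy).le.trans (hg1 a')
      have e2 := hw x
      have e3 := hw y
      have e4 := dist_triangle4 (pos (w x)) x y (pos (w y))
      rw [dist_comm y] at e4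
      linarith
  have hdown : ∀ k, PP pos (k + 1) → PP pos 1 := by
    intro k
    induction k with
    | zero => exact id
    | succ k ih => exact fun h => ih (PP_step pos o hfin w hw hkill u g hg1 hus hu0 hud v hv hvc
        hvg hvd hv0 k h)
  obtain ⟨V, S, -, -, hVd, hV0, -, -, hS0, hVS⟩ := hdown _ hstart
  have h1 := hVS {w o} (by simp)
  have hd1 : dA (single ({w o} : Finset ι) (1 : ZMod 2)) = single ∅ 1 := by
    rw [dA_single]; simp
  rw [hd1, hS0, add_zero] at h1
  have h2 := hVd (single {w o} 1)
  rw [hd1, hV0, h1, dA_dA] at h2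
  have h3 := DFunLike.congr_fun h2 (∅ : Finset ι)
  simp at h3

end core

end

end AGC

/-- **Almost geodesic completeness** (Theorem E / Theorem `agcc3`): if a proper,
finite-dimensional geodesic metric space with a ccc geodesic bicombing admits a cocompact
isometric group action and carries two non-asymptotic `σ`-rays, then it is almost
`σ`-geodesically complete. -/
theorem almost_geodesically_complete
    {G : Type*} [Group G] [MulAction G X] [ProperSpace X]
    (hgeo : IsGeodesicSpace X)
    (hdim : FiniteCoveringDimension X)
    (σ : X → X → ℝ → X) (hσ : IsCCC σ)
    (hiso : ∀ g : G, Isometry (fun x : X => g • x))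
    (hcocompact : ∃ K : Set X, IsCompact K ∧ ∀ x : X, ∃ g : G, x ∈ g • K)
    (hrays : ∃ ξ ζ : ℝ → X, IsRay σ ξ ∧ IsRay σ ζ ∧ ¬ Asymptotic ξ ζ) :
    ∃ (o : X) (C : ℝ), 0 ≤ C ∧ ∀ x : X, ∃ ξ : ℝ → X,
      IsRay σ ξ ∧ ξ 0 = o ∧ ∃ t : ℝ, 0 ≤ t ∧ dist (ξ t) x ≤ C := by
  by_contra hcon
  push Not at hcon
  obtain ⟨ξ, ζ, hξ, -, -⟩ := hrays
  classical
  obtain ⟨ι, pos, w, n, hw, hfin, hsmall⟩ := AGC.cover_exists hdim (ξ 0)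
  refine AGC.core σ hσ pos (ξ 0) w n hw hfin hsmall
    (AGC.kill σ hσ hiso hcocompact (ξ 0) ξ hξ rfl ?_)
  intro C hC
  obtain ⟨x, hx⟩ := hcon (ξ 0) C hC
  exact ⟨x, fun ξ' h1 h2 t ht => hx ξ' h1 h2 t ht⟩
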